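/- Let X be a compact metric space with metric of diameter at most 1 and let f: X → X be a continuous surjection. Let lim←(X,f) = { (x_0, x_1, x_2, …) ∈ X^ℕ : f(x_{n+1}) = x_n for all n } with metric D(x, y) = Σ_{n≥0} 2^{−n} d(x_n, y_n), and let σ: lim←(X,f) → lim←(X,f) be the shift homeomorphism σ(x_0, x_1, …) = (f(x_0), x_0, x_1, …). Then: (1) σ has shadowing if and only if f has shadowing; (2) σ has limit shadowing if and only if f has limit shadowing; (3) σ has s-limit shadowing if and only if f has s-limit shadowing. -/

import Mathlib

/-!
Write `π_k : Y → X` for the `k`-th coordinate of the inverse limit. Two points of `Y` are close as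
soon as finitely many coordinates are close, and, by uniform continuity of `f`, as soon as a single
coordinate of large index is close (`close_of_coord`). Also `π_k ∘ σ = f ∘ π_k`.

From `f` to `σ`: project a pseudo-orbit of `σ` by `π_N` with `N` large, shadow the image in `X`, and
lift the shadowing point through `π_N`, which is onto. If the shadowing is asymptotic in the
coordinate `N`, it is so in every coordinate `k ≥ N`, because `π_{k+1} ∘ σ = π_k`; hence it is
asymptotic in `Y` (`tendsto_of_coord`).

From `σ` to `f`: given a pseudo-orbit `(x_n)` of `f`, extend it to negative indices by a backward
orbit of `x_0`, and let `y_n` be a point of `Y` whose weighted distance to the sequence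
`(x_n, x_{n-1}, x_{n-2}, …)` is minimal up to an error tending to `0`. A lift of `x_{n-N}` through
`π_N` shows that the minimum is small for all `n` if `(x_n)` is a `δ`-pseudo-orbit with `δ` small,
and tends to `0` if `(x_n)` is an asymptotic pseudo-orbit (`exists_approx`). Hence `(y_n)` is a
pseudo-orbit of `σ` of the same kind with `π_0 y_n` close to `x_n` (`exists_lift`), and if `w` shadows
`(y_n)` then `π_0 w` shadows `(x_n)`. No rate of convergence is needed for this choice of `y_n`.
-/


/-- `f` has the (classical) shadowing property. -/
def Shadowing {X : Type*} [MetricSpace X] (f : X → X) : Prop :=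
  ∀ ε : ℝ, 0 < ε → ∃ δ : ℝ, 0 < δ ∧
    ∀ x : ℕ → X, (∀ n, dist (f (x n)) (x (n + 1)) < δ) →
      ∃ z : X, ∀ n, dist (f^[n] z) (x n) < ε

/-- `f` has the limit (asymptotic) shadowing property. -/
def LimitShadowing {X : Type*} [MetricSpace X] (f : X → X) : Prop :=
  ∀ x : ℕ → X,
    Filter.Tendsto (fun n => dist (f (x n)) (x (n + 1))) Filter.atTop (nhds 0) →
    ∃ z : X, Filter.Tendsto (fun n => dist (f^[n] z) (x n)) Filter.atTop (nhds 0)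

/-- `f` has the s-limit shadowing property. -/
def SLimitShadowing {X : Type*} [MetricSpace X] (f : X → X) : Prop :=
  ∀ ε : ℝ, 0 < ε → ∃ δ : ℝ, 0 < δ ∧
    (∀ x : ℕ → X, (∀ n, dist (f (x n)) (x (n + 1)) < δ) →
      ∃ z : X, ∀ n, dist (f^[n] z) (x n) < ε) ∧
    (∀ x : ℕ → X, (∀ n, dist (f (x n)) (x (n + 1)) < δ) →
      Filter.Tendsto (fun n => dist (f (x n)) (x (n + 1))) Filter.atTop (nhds 0) →
      ∃ z : X, (∀ n, dist (f^[n] z) (x n) < ε) ∧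
        Filter.Tendsto (fun n => dist (f^[n] z) (x n)) Filter.atTop (nhds 0))

open Filter Topology

/-! ### The weighted distance of sequences -/

/-- The distance `∑ 2⁻ᵏ d(a_k, b_k)` of two arbitrary sequences in `X`. -/
noncomputable def wdist {X : Type*} [MetricSpace X] (a b : ℕ → X) : ℝ :=
  ∑' k : ℕ, (1 / 2 : ℝ) ^ k * dist (a k) (b k)

section
variable {X : Type*} [MetricSpace X]

lemma wdist_summable (hdiam : ∀ x y : X, dist x y ≤ 1) (a b : ℕ → X) :
    Summable fun k : ℕ => (1 / 2 : ℝ) ^ k * dist (a k) (b k) := by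
  refine Summable.of_nonneg_of_le (fun k => by positivity) (fun k => ?_) summable_geometric_two
  exact mul_le_of_le_one_right (by positivity) (hdiam _ _)

lemma wdist_nonneg (a b : ℕ → X) : 0 ≤ wdist a b :=
  tsum_nonneg fun k => by positivity

lemma coord_le_wdist (hdiam : ∀ x y : X, dist x y ≤ 1) (a b : ℕ → X) (k : ℕ) :
    dist (a k) (b k) ≤ 2 ^ k * wdist a b := by
  have h := (wdist_summable hdiam a b).le_tsum k (fun j _ => by positivity)
  have h2 : dist (a k) (b k) = 2 ^ k * ((1 / 2 : ℝ) ^ k * dist (a k) (b k)) := by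
    rw [← mul_assoc, ← mul_pow]; norm_num
  rw [h2]
  exact mul_le_mul_of_nonneg_left h (by positivity)

/-- Sequences which are close in finitely many coordinates are close. -/
lemma wdist_lt_of_coord (hdiam : ∀ x y : X, dist x y ≤ 1) {η : ℝ} (hη : 0 < η) :
    ∃ N : ℕ, ∃ δ > 0, ∀ a b : ℕ → X, (∀ k < N, dist (a k) (b k) < δ) → wdist a b < η := by
  obtain ⟨N, hN⟩ := exists_pow_lt_of_lt_one (show 0 < η / 4 by positivity)
    (show (1 / 2 : ℝ) < 1 by norm_num)
  refine ⟨N, η / 4, by positivity, fun a b h => ?_⟩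
  have hs := wdist_summable hdiam a b
  have h1 : ∑ k ∈ Finset.range N, (1 / 2 : ℝ) ^ k * dist (a k) (b k) ≤ 2 * (η / 4) := by
    calc ∑ k ∈ Finset.range N, (1 / 2 : ℝ) ^ k * dist (a k) (b k)
        ≤ ∑ k ∈ Finset.range N, (1 / 2 : ℝ) ^ k * (η / 4) := by
          refine Finset.sum_le_sum fun k hk => ?_
          exact mul_le_mul_of_nonneg_left (h k (Finset.mem_range.1 hk)).le (by positivity)
      _ = (∑ k ∈ Finset.range N, (1 / 2 : ℝ) ^ k) * (η / 4) := by rw [Finset.sum_mul]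
      _ ≤ 2 * (η / 4) := by
          refine mul_le_mul_of_nonneg_right ?_ (by positivity)
          exact sum_geometric_two_le N
  have h2 : ∑' k : ℕ, (1 / 2 : ℝ) ^ (k + N) * dist (a (k + N)) (b (k + N))
      ≤ 2 * (1 / 2 : ℝ) ^ N := by
    calc ∑' k : ℕ, (1 / 2 : ℝ) ^ (k + N) * dist (a (k + N)) (b (k + N))
        ≤ ∑' k : ℕ, (1 / 2 : ℝ) ^ k * (1 / 2 : ℝ) ^ N := by
          refine Summable.tsum_le_tsum (fun k => ?_) ((summable_nat_add_iff N).2 hs)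
            (summable_geometric_two.mul_right _)
          rw [← pow_add]
          exact mul_le_of_le_one_right (by positivity) (hdiam _ _)
      _ = 2 * (1 / 2 : ℝ) ^ N := by rw [tsum_mul_right, tsum_geometric_two]
  have h3 := hs.sum_add_tsum_nat_add N
  unfold wdist
  linarith

lemma exists_almost_min {Y : Type*} [Nonempty Y] (p : Y → ℕ → X) (b : ℕ → X) {r : ℝ} (hr : 0 < r) :
    ∃ y, ∀ v, wdist (p y) b < wdist (p v) b + r := by
  have hbdd : BddBelow (Set.range fun v => wdist (p v) b) :=
    ⟨0, by rintro _ ⟨v, rfl⟩; exact wdist_nonneg _ _⟩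
  obtain ⟨y, hy⟩ := exists_lt_of_ciInf_lt (lt_add_of_pos_right (⨅ v, wdist (p v) b) hr)
  exact ⟨y, fun v => hy.trans_le (by gcongr; exact ciInf_le hbdd v)⟩

/-- Uniform continuity of the first iterates of `f`, with one modulus. -/
lemma iterate_modulus [CompactSpace X] {f : X → X} (hf : Continuous f) (N : ℕ) {η : ℝ}
    (hη : 0 < η) :
    ∃ δ > 0, ∀ u v : X, dist u v < δ → ∀ j ≤ N, dist (f^[j] u) (f^[j] v) < η := by
  induction N with
  | zero =>
    refine ⟨η, hη, fun u v h j hj => ?_⟩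
    obtain rfl : j = 0 := by omega
    simpa using h
  | succ N ih =>
    obtain ⟨δ, hδ, h⟩ := ih
    obtain ⟨δ', hδ', h'⟩ := Metric.uniformContinuous_iff.1
      (CompactSpace.uniformContinuous_of_continuous (hf.iterate (N + 1))) η hη
    refine ⟨min δ δ', lt_min hδ hδ', fun u v huv j hj => ?_⟩
    rcases Nat.lt_or_ge N j with hj' | hj'
    · obtain rfl : j = N + 1 := by omega
      exact h' (huv.trans_le (min_le_right _ _))
    · exact h u v (huv.trans_le (min_le_left _ _)) j hj'

/-- If `f (b (k+1))` is close to `b k` for finitely many `k`, then `b k` is close to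
`f^[N-k] (b N)` for all `k ≤ N`. -/
lemma chain_close [CompactSpace X] {f : X → X} (hf : Continuous f) (N : ℕ) {η : ℝ}
    (hη : 0 < η) :
    ∃ δ > 0, ∀ b : ℕ → X, (∀ k < N, dist (f (b (k + 1))) (b k) < δ) →
      ∀ k ≤ N, dist (f^[N - k] (b N)) (b k) < η := by
  induction N generalizing η with
  | zero =>
    refine ⟨1, one_pos, fun b _ k hk => ?_⟩
    obtain rfl : k = 0 := by omega
    simpa using hη
  | succ N ih =>
    obtain ⟨δ, hδ, h⟩ := ih (half_pos hη)
    obtain ⟨δ', hδ', h'⟩ := iterate_modulus hf N (half_pos hη)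
    refine ⟨min δ δ', lt_min hδ hδ', fun b hb k hk => ?_⟩
    rcases Nat.lt_or_ge N k with hk' | hk'
    · obtain rfl : k = N + 1 := by omega
      simpa using hη
    · have h1 := h b (fun j hj => (hb j (by omega)).trans_le (min_le_left _ _)) k hk'
      have h2 := h' _ _ ((hb N (by omega)).trans_le (min_le_right _ _)) (N - k) (by omega)
      rw [show N + 1 - k = (N - k) + 1 by omega, Function.iterate_succ_apply]
      calc _ ≤ _ := dist_triangle _ _ _
        _ < η / 2 + η / 2 := add_lt_add h2 h1
        _ = η := add_halves η

/-! ### The inverse limit -/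

variable {Y : Type*} [MetricSpace Y]

/-- `Y` with the coordinates `p y k` and the map `σ` behaves as the inverse limit of the surjection
`f` with its shift: coordinates are backward orbits of `f`, each coordinate is onto, and the metric
is the weighted one. -/
structure IsShiftModel (f : X → X) (p : Y → ℕ → X) (σ : Y → Y) : Prop where
  diam : ∀ x y : X, dist x y ≤ 1
  comp : ∀ y n, f (p y (n + 1)) = p y n
  lift : ∀ N x, ∃ y, p y N = x
  dist_eq : ∀ y z, dist y z = wdist (p y) (p z)
  shift_zero : ∀ y, p (σ y) 0 = f (p y 0)
  shift_succ : ∀ y n, p (σ y) (n + 1) = p y n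

namespace IsShiftModel

variable {f : X → X} {p : Y → ℕ → X} {σ : Y → Y}

lemma coord_shift (M : IsShiftModel f p σ) (y : Y) (k : ℕ) : p (σ y) k = f (p y k) := by
  cases k with
  | zero => exact M.shift_zero y
  | succ k => rw [M.shift_succ, M.comp]

lemma coord_iterate (M : IsShiftModel f p σ) (y : Y) (k n : ℕ) : p (σ^[n] y) k = f^[n] (p y k) := by
  induction n with
  | zero => rfl
  | succ n ih => rw [Function.iterate_succ_apply', Function.iterate_succ_apply', M.coord_shift, ih]

lemma iterate_coord (M : IsShiftModel f p σ) (y : Y) (k j : ℕ) : f^[j] (p y (k + j)) = p y k := by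
  induction j with
  | zero => rfl
  | succ j ih => rw [Function.iterate_succ_apply, ← add_assoc, M.comp, ih]

lemma coord_le (M : IsShiftModel f p σ) (y z : Y) (k : ℕ) : dist (p y k) (p z k) ≤ 2 ^ k * dist y z := by
  rw [M.dist_eq]; exact coord_le_wdist M.diam _ _ k

lemma coord_zero_le (M : IsShiftModel f p σ) (y z : Y) : dist (p y 0) (p z 0) ≤ dist y z := by
  simpa using M.coord_le y z 0

/-- A single coordinate of large index controls the distance in the inverse limit. -/
lemma close_of_coord (M : IsShiftModel f p σ) [CompactSpace X] (hf : Continuous f) {η : ℝ} (hη : 0 < η) :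
    ∃ N₀ : ℕ, ∀ N ≥ N₀, ∃ δ > 0, ∀ y z : Y, dist (p y N) (p z N) < δ → dist y z < η := by
  obtain ⟨N₀, δ₁, hδ₁, h₁⟩ := wdist_lt_of_coord (X := X) M.diam hη
  refine ⟨N₀, fun N hN => ?_⟩
  obtain ⟨δ, hδ, h⟩ := iterate_modulus hf N hδ₁
  refine ⟨δ, hδ, fun y z hyz => ?_⟩
  rw [M.dist_eq]
  refine h₁ _ _ fun k hk => ?_
  have h2 := h _ _ hyz (N - k) (by omega)
  have e : N = k + (N - k) := by omega
  have ey := M.iterate_coord y k (N - k)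
  have ez := M.iterate_coord z k (N - k)
  rw [← e] at ey ez
  rwa [ey, ez] at h2

/-! ### From the base map to the shift -/

/-- Asymptotic shadowing of an asymptotic pseudo-orbit in one coordinate gives asymptotic shadowing
in the inverse limit. -/
lemma tendsto_of_coord (M : IsShiftModel f p σ) [CompactSpace X] (hf : Continuous f) {y : ℕ → Y}
    (hy : Tendsto (fun n => dist (σ (y n)) (y (n + 1))) atTop (𝓝 0)) (w : Y) (N : ℕ)
    (hw : Tendsto (fun n => dist (p (σ^[n] w) N) (p (y n) N)) atTop (𝓝 0)) :
    Tendsto (fun n => dist (σ^[n] w) (y n)) atTop (𝓝 0) := by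
  have key : ∀ k ≥ N, Tendsto (fun n => dist (p (σ^[n] w) k) (p (y n) k)) atTop (𝓝 0) := by
    intro k hk
    induction k, hk using Nat.le_induction with
    | base => exact hw
    | succ k _ ih =>
      rw [← tendsto_add_atTop_iff_nat 1]
      have hlim := ih.add (hy.const_mul ((2 : ℝ) ^ (k + 1)))
      rw [mul_zero, add_zero] at hlim
      refine squeeze_zero (fun _ => dist_nonneg) (fun n => ?_) hlim
      have h1 := M.coord_le (σ (y n)) (y (n + 1)) (k + 1)
      have h2 := dist_triangle (p (σ^[n + 1] w) (k + 1)) (p (σ (y n)) (k + 1))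
        (p (y (n + 1)) (k + 1))
      have h3 : dist (p (σ^[n + 1] w) (k + 1)) (p (σ (y n)) (k + 1))
          = dist (p (σ^[n] w) k) (p (y n) k) := by
        rw [Function.iterate_succ_apply', M.shift_succ, M.shift_succ]
      linarith
  rw [Metric.tendsto_atTop]
  intro η hη
  obtain ⟨N₀, h⟩ := M.close_of_coord hf hη
  obtain ⟨δ, hδ, h⟩ := h (max N N₀) (le_max_right _ _)
  obtain ⟨n₀, hn₀⟩ := eventually_atTop.1 ((key (max N N₀) (le_max_left _ _)).eventually_lt_const hδ)
  refine ⟨n₀, fun n hn => ?_⟩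
  rw [Real.dist_0_eq_abs, abs_of_nonneg dist_nonneg]
  exact h _ _ (hn₀ n hn)

lemma coord_pseudo (M : IsShiftModel f p σ) {y : ℕ → Y} {N : ℕ} {δ : ℝ}
    (hy : ∀ n, dist (σ (y n)) (y (n + 1)) < δ / 2 ^ N) (n : ℕ) :
    dist (f (p (y n) N)) (p (y (n + 1)) N) < δ := by
  rw [← M.coord_shift]
  refine (M.coord_le _ _ N).trans_lt ?_
  have := (lt_div_iff₀ (show (0 : ℝ) < 2 ^ N by positivity)).1 (hy n)
  linarith

lemma coord_asymptotic (M : IsShiftModel f p σ) {y : ℕ → Y} (N : ℕ)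
    (hy : Tendsto (fun n => dist (σ (y n)) (y (n + 1))) atTop (𝓝 0)) :
    Tendsto (fun n => dist (f (p (y n) N)) (p (y (n + 1)) N)) atTop (𝓝 0) := by
  have hlim := hy.const_mul ((2 : ℝ) ^ N)
  rw [mul_zero] at hlim
  refine squeeze_zero (fun _ => dist_nonneg) (fun n => ?_) hlim
  rw [← M.coord_shift]
  exact M.coord_le _ _ N

lemma shadowing_shift (M : IsShiftModel f p σ) [CompactSpace X] (hf : Continuous f) (h : Shadowing f) : Shadowing σ := by
  intro ε hε
  obtain ⟨N, hN⟩ := M.close_of_coord hf hε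
  obtain ⟨δ₁, hδ₁, hN⟩ := hN N le_rfl
  obtain ⟨δ, hδ, h⟩ := h δ₁ hδ₁
  refine ⟨δ / 2 ^ N, by positivity, fun y hy => ?_⟩
  obtain ⟨z, hz⟩ := h (fun n => p (y n) N) (M.coord_pseudo hy)
  obtain ⟨w, rfl⟩ := M.lift N z
  exact ⟨w, fun n => hN _ _ (by rw [M.coord_iterate]; exact hz n)⟩

lemma limitShadowing_shift (M : IsShiftModel f p σ) [CompactSpace X] (hf : Continuous f) (h : LimitShadowing f) :
    LimitShadowing σ := by
  intro y hy
  obtain ⟨z, hz⟩ := h (fun n => p (y n) 0) (M.coord_asymptotic 0 hy)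
  obtain ⟨w, rfl⟩ := M.lift 0 z
  exact ⟨w, M.tendsto_of_coord hf hy w 0 (by simpa only [M.coord_iterate] using hz)⟩

lemma sLimitShadowing_shift (M : IsShiftModel f p σ) [CompactSpace X] (hf : Continuous f) (h : SLimitShadowing f) :
    SLimitShadowing σ := by
  intro ε hε
  obtain ⟨N, hN⟩ := M.close_of_coord hf hε
  obtain ⟨δ₁, hδ₁, hN⟩ := hN N le_rfl
  obtain ⟨δ, hδ, h, h'⟩ := h δ₁ hδ₁
  refine ⟨δ / 2 ^ N, by positivity, fun y hy => ?_, fun y hy hy' => ?_⟩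
  · obtain ⟨z, hz⟩ := h (fun n => p (y n) N) (M.coord_pseudo hy)
    obtain ⟨w, rfl⟩ := M.lift N z
    exact ⟨w, fun n => hN _ _ (by rw [M.coord_iterate]; exact hz n)⟩
  · obtain ⟨z, hz, hz'⟩ := h' (fun n => p (y n) N) (M.coord_pseudo hy) (M.coord_asymptotic N hy')
    obtain ⟨w, rfl⟩ := M.lift N z
    exact ⟨w, fun n => hN _ _ (by rw [M.coord_iterate]; exact hz n),
      M.tendsto_of_coord hf hy' w N (by simpa only [M.coord_iterate] using hz')⟩

/-! ### From the shift to the base map -/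

/-- A sequence which is nearly a backward orbit, in finitely many coordinates, is close to a point
of the inverse limit. -/
lemma exists_approx (M : IsShiftModel f p σ) [CompactSpace X] (hf : Continuous f) {η : ℝ} (hη : 0 < η) :
    ∃ N : ℕ, ∃ δ > 0, ∀ b : ℕ → X, (∀ k < N, dist (f (b (k + 1))) (b k) < δ) →
      ∃ y, wdist (p y) b < η := by
  obtain ⟨N, δ₁, hδ₁, h₁⟩ := wdist_lt_of_coord (X := X) M.diam hη
  obtain ⟨δ, hδ, h⟩ := chain_close hf N hδ₁
  refine ⟨N, δ, hδ, fun b hb => ?_⟩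
  obtain ⟨y, hy⟩ := M.lift N (b N)
  refine ⟨y, h₁ _ _ fun k hk => ?_⟩
  have e : N = k + (N - k) := by omega
  have ey := M.iterate_coord y k (N - k)
  rw [← e, hy] at ey
  rw [← ey]
  exact h b hb k hk.le

/-- If `y`, `y'` approximate sequences `b`, `b'` such that `b'` is `b` with a first term close to
`f (b 0)` put in front, then `y'` is close to `σ y`. -/
lemma shift_close (M : IsShiftModel f p σ) [CompactSpace X] (hf : Continuous f) {η : ℝ} (hη : 0 < η) :
    ∃ δ > 0, ∀ (b b' : ℕ → X) (y y' : Y), (∀ k, b' (k + 1) = b k) → dist (f (b 0)) (b' 0) < δ →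
      wdist (p y) b < δ → wdist (p y') b' < δ → dist (σ y) y' < η := by
  obtain ⟨N, δ₁, hδ₁, h₁⟩ := wdist_lt_of_coord (X := X) M.diam hη
  obtain ⟨δ₂, hδ₂, h₂⟩ := Metric.uniformContinuous_iff.1
      (CompactSpace.uniformContinuous_of_continuous hf) (δ₁ / 3) (by positivity)
  -- the factor `2⁻ᴺ` turns closeness in `wdist` into closeness of the coordinates up to `N`
  refine ⟨min δ₂ (δ₁ / 3 / 2 ^ N), by positivity, fun b b' y y' hbb h0 hy hy' => ?_⟩
  have small : ∀ (c : ℕ → X) (v : Y), wdist (p v) c < min δ₂ (δ₁ / 3 / 2 ^ N) → ∀ k ≤ N,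
      dist (p v k) (c k) < δ₁ / 3 := by
    intro c v hv k hk
    have h3 := (lt_div_iff₀ (show (0 : ℝ) < 2 ^ N by positivity)).1
      (hv.trans_le (min_le_right _ _))
    have h4 : (2 : ℝ) ^ k * wdist (p v) c ≤ 2 ^ N * wdist (p v) c :=
      mul_le_mul_of_nonneg_right (pow_le_pow_right₀ (by norm_num) hk) (wdist_nonneg _ _)
    linarith [coord_le_wdist M.diam (p v) c k]
  have hpow : δ₁ / 3 / 2 ^ N ≤ δ₁ / 3 :=
    div_le_self (by positivity) (one_le_pow₀ (by norm_num))
  rw [M.dist_eq]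
  refine h₁ _ _ fun k hk => ?_
  cases k with
  | zero =>
    rw [M.shift_zero]
    have a1 : dist (p y 0) (b 0) < δ₂ := by
      have := coord_le_wdist M.diam (p y) b 0
      rw [pow_zero, one_mul] at this
      exact this.trans_lt (hy.trans_le (min_le_left _ _))
    have a2 := h₂ a1
    have a3 := h0.trans_le (min_le_right _ _)
    have a4 := small b' y' hy' 0 (by omega)
    rw [dist_comm] at a4
    have := dist_triangle4 (f (p y 0)) (f (b 0)) (b' 0) (p y' 0)
    linarith
  | succ k =>
    rw [M.shift_succ]
    have a1 := small b y hy k (by omega)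
    have a2 := small b' y' hy' (k + 1) hk.le
    rw [hbb, dist_comm] at a2
    have := dist_triangle (p y k) (b k) (p y' (k + 1))
    linarith

/-- Lifting of pseudo-orbits of `f` to pseudo-orbits of `σ`, both uniformly and asymptotically. -/
lemma exists_lift (M : IsShiftModel f p σ) [CompactSpace X] (hf : Continuous f) {η : ℝ} (hη : 0 < η) :
    ∃ δ > 0, ∀ x : ℕ → X, ∃ y : ℕ → Y,
      ((∀ n, dist (f (x n)) (x (n + 1)) < δ) →
        (∀ n, dist (σ (y n)) (y (n + 1)) < η) ∧ ∀ n, dist (p (y n) 0) (x n) < η) ∧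
      (Tendsto (fun n => dist (f (x n)) (x (n + 1))) atTop (𝓝 0) →
        Tendsto (fun n => dist (σ (y n)) (y (n + 1))) atTop (𝓝 0) ∧
        Tendsto (fun n => dist (p (y n) 0) (x n)) atTop (𝓝 0)) := by
  obtain ⟨δ₁, hδ₁, h₁⟩ := M.shift_close hf hη
  set θ := min η δ₁ with hθ
  have hθ0 : 0 < θ := lt_min hη hδ₁
  obtain ⟨N, δ₂, hδ₂, h₂⟩ := M.exists_approx hf (half_pos hθ0)
  refine ⟨min δ₁ δ₂, lt_min hδ₁ hδ₂, fun x => ?_⟩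
  obtain ⟨y₀, hy₀⟩ := M.lift 0 (x 0)
  have : Nonempty Y := ⟨y₀⟩
  -- `a n k` is `x_{n-k}`, where `x` is continued to negative indices by the backward orbit `y₀`
  let a : ℕ → ℕ → X := fun n k => if k ≤ n then x (n - k) else p y₀ (k - n)
  have a_zero : ∀ n, a n 0 = x n := fun n => by simp [a]
  have a_succ : ∀ n k, a (n + 1) (k + 1) = a n k := fun n k => by simp [a]
  have a_lt : ∀ n k, k < n → dist (f (a n (k + 1))) (a n k)
      = dist (f (x (n - (k + 1)))) (x (n - (k + 1) + 1)) := by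
    intro n k hk
    simp only [a]
    rw [if_pos (by omega), if_pos (by omega), show n - (k + 1) + 1 = n - k by omega]
  have a_ge : ∀ n k, n ≤ k → f (a n (k + 1)) = a n k := by
    intro n k hk
    simp only [a]
    rw [if_neg (by omega), show k + 1 - n = (k - n) + 1 by omega, M.comp]
    split_ifs with h
    · obtain rfl : k = n := by omega
      simpa using hy₀
    · rfl
  have hr : ∀ n : ℕ, 0 < min (θ / 2) (1 / ((n : ℝ) + 1)) := fun n => by positivity
  choose y hy using fun n => exists_almost_min p (a n) (hr n)
  have coord0 : ∀ n, dist (p (y n) 0) (x n) ≤ wdist (p (y n)) (a n) := by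
    intro n
    have := coord_le_wdist M.diam (p (y n)) (a n) 0
    rwa [pow_zero, one_mul, a_zero] at this
  refine ⟨y, fun hx => ?_, fun hx => ?_⟩
  · have hV : ∀ n, wdist (p (y n)) (a n) < θ := by
      intro n
      obtain ⟨v, hv⟩ := h₂ (a n) fun k _ => by
        rcases Nat.lt_or_ge k n with hk | hk
        · rw [a_lt n k hk]; exact (hx _).trans_le (min_le_right _ _)
        · rw [a_ge n k hk, dist_self]; exact hδ₂
      have := hy n v
      have := min_le_left (θ / 2) (1 / ((n : ℝ) + 1))
      linarith
    refine ⟨fun n => ?_, fun n => (coord0 n).trans_lt ((hV n).trans_le (min_le_left _ _))⟩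
    refine h₁ (a n) (a (n + 1)) _ _ (a_succ n) ?_ ((hV n).trans_le (min_le_right _ _))
      ((hV _).trans_le (min_le_right _ _))
    rw [a_zero, a_zero]
    exact (hx n).trans_le (min_le_left _ _)
  · have hV : Tendsto (fun n => wdist (p (y n)) (a n)) atTop (𝓝 0) := by
      refine (tendsto_order.2 ⟨fun c hc => Eventually.of_forall fun n =>
        hc.trans_le (wdist_nonneg _ _), fun c hc => ?_⟩)
      obtain ⟨N', δ', hδ', h'⟩ := M.exists_approx hf (half_pos hc)
      obtain ⟨n₀, hn₀⟩ := eventually_atTop.1 (hx.eventually_lt_const hδ')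
      filter_upwards [eventually_ge_atTop (n₀ + N'),
        (tendsto_one_div_add_atTop_nhds_zero_nat (𝕜 := ℝ)).eventually_lt_const (half_pos hc)]
        with n hn hn'
      obtain ⟨v, hv⟩ := h' (a n) fun k hk => by
        rw [a_lt n k (by omega)]
        exact hn₀ _ (by omega)
      have := hy n v
      have := min_le_right (θ / 2) (1 / ((n : ℝ) + 1))
      linarith
    refine ⟨?_, squeeze_zero (fun _ => dist_nonneg) coord0 hV⟩
    refine (tendsto_order.2 ⟨fun c hc => Eventually.of_forall fun n =>
      hc.trans_le dist_nonneg, fun c hc => ?_⟩)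
    obtain ⟨δ', hδ', h'⟩ := M.shift_close hf hc
    filter_upwards [hx.eventually_lt_const hδ', hV.eventually_lt_const hδ',
      ((tendsto_add_atTop_iff_nat 1).2 hV).eventually_lt_const hδ'] with n e1 e2 e3
    exact h' (a n) (a (n + 1)) _ _ (a_succ n) (by rwa [a_zero, a_zero]) e2 e3

lemma base_close (M : IsShiftModel f p σ) {ε : ℝ} {x : ℕ → X} {y : ℕ → Y} {w : Y}
    (hw : ∀ n, dist (σ^[n] w) (y n) < ε / 2) (hy : ∀ n, dist (p (y n) 0) (x n) < ε / 2) (n : ℕ) :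
    dist (f^[n] (p w 0)) (x n) < ε := by
  rw [← M.coord_iterate]
  have := dist_triangle (p (σ^[n] w) 0) (p (y n) 0) (x n)
  linarith [M.coord_zero_le (σ^[n] w) (y n), hw n, hy n]

lemma base_tendsto (M : IsShiftModel f p σ) {x : ℕ → X} {y : ℕ → Y} {w : Y}
    (hw : Tendsto (fun n => dist (σ^[n] w) (y n)) atTop (𝓝 0))
    (hy : Tendsto (fun n => dist (p (y n) 0) (x n)) atTop (𝓝 0)) :
    Tendsto (fun n => dist (f^[n] (p w 0)) (x n)) atTop (𝓝 0) := by
  have hlim := hw.add hy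
  rw [add_zero] at hlim
  refine squeeze_zero (fun _ => dist_nonneg) (fun n => ?_) hlim
  rw [← M.coord_iterate]
  have := dist_triangle (p (σ^[n] w) 0) (p (y n) 0) (x n)
  linarith [M.coord_zero_le (σ^[n] w) (y n)]

lemma shadowing_base (M : IsShiftModel f p σ) [CompactSpace X] (hf : Continuous f) (h : Shadowing σ) : Shadowing f := by
  intro ε hε
  obtain ⟨δ₁, hδ₁, h⟩ := h (ε / 2) (half_pos hε)
  obtain ⟨δ, hδ, hl⟩ := M.exists_lift hf (lt_min (half_pos hε) hδ₁)
  refine ⟨δ, hδ, fun x hx => ?_⟩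
  obtain ⟨y, hy, -⟩ := hl x
  obtain ⟨hy1, hy2⟩ := hy hx
  obtain ⟨w, hw⟩ := h y fun n => (hy1 n).trans_le (min_le_right _ _)
  exact ⟨p w 0, M.base_close hw fun n => (hy2 n).trans_le (min_le_left _ _)⟩

lemma limitShadowing_base (M : IsShiftModel f p σ) [CompactSpace X] (hf : Continuous f) (h : LimitShadowing σ) :
    LimitShadowing f := by
  intro x hx
  obtain ⟨δ, hδ, hl⟩ := M.exists_lift hf one_pos
  obtain ⟨y, -, hy⟩ := hl x
  obtain ⟨hy1, hy2⟩ := hy hx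
  obtain ⟨w, hw⟩ := h y hy1
  exact ⟨p w 0, M.base_tendsto hw hy2⟩

lemma sLimitShadowing_base (M : IsShiftModel f p σ) [CompactSpace X] (hf : Continuous f) (h : SLimitShadowing σ) :
    SLimitShadowing f := by
  intro ε hε
  obtain ⟨δ₁, hδ₁, h, h'⟩ := h (ε / 2) (half_pos hε)
  obtain ⟨δ, hδ, hl⟩ := M.exists_lift hf (lt_min (half_pos hε) hδ₁)
  refine ⟨δ, hδ, fun x hx => ?_, fun x hx hx' => ?_⟩
  · obtain ⟨y, hy, -⟩ := hl x
    obtain ⟨hy1, hy2⟩ := hy hx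
    obtain ⟨w, hw⟩ := h y fun n => (hy1 n).trans_le (min_le_right _ _)
    exact ⟨p w 0, M.base_close hw fun n => (hy2 n).trans_le (min_le_left _ _)⟩
  · obtain ⟨y, hy, hy'⟩ := hl x
    obtain ⟨hy1, hy2⟩ := hy hx
    obtain ⟨hy3, hy4⟩ := hy' hx'
    obtain ⟨w, hw, hw'⟩ := h' y (fun n => (hy1 n).trans_le (min_le_right _ _)) hy3
    exact ⟨p w 0, M.base_close hw fun n => (hy2 n).trans_le (min_le_left _ _),
      M.base_tendsto hw' hy4⟩

end IsShiftModel

end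

/-- Let `f : X → X` be a continuous surjection of a compact metric
space of diameter at most `1`, let `Y` (with bijection `e`) be the inverse limit
`lim←(X,f) = {(x₀,x₁,…) : f(x_{n+1}) = x_n}` with metric `D(x,y) = Σ 2⁻ⁿ d(x_n,y_n)`,
and let `σ` be the shift homeomorphism `σ(x₀,x₁,…) = (f(x₀),x₀,x₁,…)`. Then `σ` has
shadowing (resp. limit shadowing, s-limit shadowing) iff `f` does. -/
theorem inverse_limit_shadowing_iff
    {X : Type*} [MetricSpace X] [CompactSpace X]
    (hdiam : ∀ x y : X, dist x y ≤ 1)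
    (f : X → X) (hf : Continuous f) (hsurj : Function.Surjective f)
    (Y : Type*) [MetricSpace Y]
    (e : Y ≃ {x : ℕ → X // ∀ n, f (x (n + 1)) = x n})
    (hdist : ∀ y z : Y,
      dist y z = ∑' n : ℕ, (1 / 2 : ℝ) ^ n * dist ((e y).1 n) ((e z).1 n))
    (σ : Y → Y)
    (hσ0 : ∀ y : Y, (e (σ y)).1 0 = f ((e y).1 0))
    (hσsucc : ∀ (y : Y) (n : ℕ), (e (σ y)).1 (n + 1) = (e y).1 n) :
    (Shadowing σ ↔ Shadowing f) ∧
    (LimitShadowing σ ↔ LimitShadowing f) ∧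
    (SLimitShadowing σ ↔ SLimitShadowing f) := by
  have M : IsShiftModel f (fun y n => (e y).1 n) σ := by
    refine ⟨hdiam, fun y n => (e y).2 n, fun N x => ?_, hdist, hσ0, hσsucc⟩
    -- with a right inverse `g` of `f`, the sequence `n ↦ f^N (g^n x)` is a backward orbit whose
    -- `N`-th term is `x`
    obtain ⟨g, hg⟩ := hsurj.hasRightInverse
    refine ⟨e.symm ⟨fun n => f^[N] (g^[n] x), fun n => ?_⟩, ?_⟩
    · rw [← Function.iterate_succ_apply' f, Function.iterate_succ_apply f,
        Function.iterate_succ_apply' g, hg]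
    · simpa using hg.iterate N x
  exact ⟨⟨M.shadowing_base hf, M.shadowing_shift hf⟩,
    ⟨M.limitShadowing_base hf, M.limitShadowing_shift hf⟩,
    ⟨M.sLimitShadowing_base hf, M.sLimitShadowing_shift hf⟩⟩
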